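/- The duplicability factor does not increase under reduction of well-formed soft processes: if ⊢ Q is a well-formed SHOπ process in the empty context and Q → P, then D(Q) ≥ D(P). -/

import Mathlib

/-! Why the duplicability factor cannot grow.  Reduction takes place only under parallel
composition and restriction, neither of which binds a variable, so in a process that is well formed
in the empty context every value passed by a reduction step is closed (`foP_eq_zero`).
Substituting a closed value `U` creates no occurrence of any other variable
(`foP_substP`), so every binder of the body keeps its number of bound occurrences, while the binders
brought in by copies of `U` are already accounted for by the duplicability factor of `U`; hence
`dP (substP U k P) ≤ max (dP P) (dV U)` (`dP_substP_le`).  Structural congruence preserves both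
the occurrence counts and the duplicability factor (`foP_scp`, `dP_scp`).  Closedness is thus the
only consequence of well-formation that the argument needs. -/

/-! Syntax of LHOπ / SHOπ processes and values (variables in de Bruijn style,
channels as names). -/

mutual
inductive Val : Type
  | star : Val
  | var : ℕ → Val
  | lam : Proc → Val
  | blam : Proc → Val
  | bang : Val → Val
inductive Proc : Type
  | nil : Proc
  | par : Proc → Proc → Proc
  | inp : ℕ → Proc → Proc
  | binp : ℕ → Proc → Proc
  | out : ℕ → Val → Proc → Proc
  | nu : ℕ → Proc → Proc
  | app : Val → Val → Proc
end

/-! Lifting and capture-avoiding substitution. -/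

mutual
def liftV (c : ℕ) : Val → Val
  | .star => .star
  | .var x => if x < c then .var x else .var (x + 1)
  | .lam P => .lam (liftP (c + 1) P)
  | .blam P => .blam (liftP (c + 1) P)
  | .bang V => .bang (liftV c V)
def liftP (c : ℕ) : Proc → Proc
  | .nil => .nil
  | .par P Q => .par (liftP c P) (liftP c Q)
  | .inp a P => .inp a (liftP (c + 1) P)
  | .binp a P => .binp a (liftP (c + 1) P)
  | .out a V P => .out a (liftV c V) (liftP c P)
  | .nu a P => .nu a (liftP c P)
  | .app V W => .app (liftV c V) (liftV c W)
end

mutual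
def substV (U : Val) (k : ℕ) : Val → Val
  | .star => .star
  | .var x => if x = k then U else if x < k then .var x else .var (x - 1)
  | .lam P => .lam (substP (liftV 0 U) (k + 1) P)
  | .blam P => .blam (substP (liftV 0 U) (k + 1) P)
  | .bang V => .bang (substV U k V)
def substP (U : Val) (k : ℕ) : Proc → Proc
  | .nil => .nil
  | .par P Q => .par (substP U k P) (substP U k Q)
  | .inp a P => .inp a (substP (liftV 0 U) (k + 1) P)
  | .binp a P => .binp a (substP (liftV 0 U) (k + 1) P)
  | .out a V P => .out a (substV U k V) (substP U k P)
  | .nu a P => .nu a (substP U k P)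
  | .app V W => .app (substV U k V) (substV U k W)
end

/-! Free channels and channel renaming (for α-conversion of restrictions). -/

mutual
def fcV : Val → Finset ℕ
  | .star => ∅
  | .var _ => ∅
  | .lam P => fcP P
  | .blam P => fcP P
  | .bang V => fcV V
def fcP : Proc → Finset ℕ
  | .nil => ∅
  | .par P Q => fcP P ∪ fcP Q
  | .inp a P => insert a (fcP P)
  | .binp a P => insert a (fcP P)
  | .out a V P => insert a (fcV V ∪ fcP P)
  | .nu a P => fcP P \ {a}
  | .app V W => fcV V ∪ fcV W
end

mutual
def chV (a b : ℕ) : Val → Val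
  | .star => .star
  | .var x => .var x
  | .lam P => .lam (chP a b P)
  | .blam P => .blam (chP a b P)
  | .bang V => .bang (chV a b V)
def chP (a b : ℕ) : Proc → Proc
  | .nil => .nil
  | .par P Q => .par (chP a b P) (chP a b Q)
  | .inp c P => .inp (if c = a then b else c) (chP a b P)
  | .binp c P => .binp (if c = a then b else c) (chP a b P)
  | .out c V P => .out (if c = a then b else c) (chV a b V) (chP a b P)
  | .nu c P => if c = a then .nu c P else .nu c (chP a b P)
  | .app V W => .app (chV a b V) (chV a b W)
end

/-! Structural congruence: the smallest congruence containing α-equivalence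
(for channel restrictions; α-equivalence of variables is syntactic identity in
de Bruijn style), associativity and commutativity of parallel composition,
exchange of restrictions, and scope extrusion.  No garbage-collection laws. -/

mutual
inductive SCV : Val → Val → Prop
  | refl (V) : SCV V V
  | symm : SCV V W → SCV W V
  | trans : SCV U V → SCV V W → SCV U W
  | lam : SCP P Q → SCV (.lam P) (.lam Q)
  | blam : SCP P Q → SCV (.blam P) (.blam Q)
  | bang : SCV V W → SCV (.bang V) (.bang W)
inductive SCP : Proc → Proc → Prop
  | refl (P) : SCP P P
  | symm : SCP P Q → SCP Q P
  | trans : SCP P Q → SCP Q R → SCP P R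
  | par : SCP P P' → SCP Q Q' → SCP (.par P Q) (.par P' Q')
  | inp : SCP P Q → SCP (.inp a P) (.inp a Q)
  | binp : SCP P Q → SCP (.binp a P) (.binp a Q)
  | out : SCV V W → SCP P Q → SCP (.out a V P) (.out a W Q)
  | nu : SCP P Q → SCP (.nu a P) (.nu a Q)
  | app : SCV V V' → SCV W W' → SCP (.app V W) (.app V' W')
  | assoc : SCP (.par P (.par Q R)) (.par (.par P Q) R)
  | comm : SCP (.par P Q) (.par Q P)
  | nuswap : SCP (.nu a (.nu b P)) (.nu b (.nu a P))
  | extrude : a ∉ fcP Q → SCP (.nu a (.par P Q)) (.par (.nu a P) Q)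
  | alpha : b ∉ fcP P → SCP (.nu a P) (.nu b (chP a b P))
end

/-! Reduction. -/

inductive Red : Proc → Proc → Prop
  | comm : Red (.par (.out a V P) (.inp a Q)) (.par P (substP V 0 Q))
  | bcomm : Red (.par (.out a (.bang V) P) (.binp a Q)) (.par P (substP V 0 Q))
  | beta : Red (.app (.lam P) V) (substP V 0 P)
  | bbeta : Red (.app (.blam P) (.bang V)) (substP V 0 P)
  | parL : Red P Q → Red (.par P R) (.par Q R)
  | res : Red P Q → Red (.nu a P) (.nu a Q)
  | struct : SCP P P' → Red P' Q' → SCP Q' Q → Red P Q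

/-- `m`-step reduction. -/
inductive RedN : ℕ → Proc → Proc → Prop
  | zero : RedN 0 P P
  | succ : Red P Q → RedN n Q R → RedN (n + 1) P R

/-! SHOπ well-formation.  A context entry is `none` (absent) or a marker:
linear `x`, nonlinear `!x`, or nonlinear `§x`. -/

inductive SMark : Type
  | lin : SMark
  | bang : SMark
  | para : SMark
deriving DecidableEq

abbrev Ctx := List (Option SMark)

/-- Contexts made only of §-marked (or absent) variables: these admit
weakening. -/
def ParaOnly (Γ : Ctx) : Prop := ∀ e ∈ Γ, e = none ∨ e = some .para

/-- Splitting one context entry between the two premises of a binary rule: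
linear and !-variables go to exactly one premise, §-variables may be shared
(implicit contraction). -/
inductive SplitE : Option SMark → Option SMark → Option SMark → Prop
  | none : SplitE none none none
  | linL : SplitE (some .lin) (some .lin) none
  | linR : SplitE (some .lin) none (some .lin)
  | bangL : SplitE (some .bang) (some .bang) none
  | bangR : SplitE (some .bang) none (some .bang)
  | paraL : SplitE (some .para) (some .para) none
  | paraR : SplitE (some .para) none (some .para)
  | paraB : SplitE (some .para) (some .para) (some .para)

inductive Split : Ctx → Ctx → Ctx → Prop
  | nil : Split [] [] []
  | cons : SplitE e e₁ e₂ → Split Γ Γ₁ Γ₂ → Split (e :: Γ) (e₁ :: Γ₁) (e₂ :: Γ₂)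

/-- Entry-wise relation between the context of `V` and the context of `!V`:
linear variables become !-marked ones, and weakening by §-variables is
allowed.  §- and !-variables may not appear inside a !-box. -/
inductive BangE : Option SMark → Option SMark → Prop
  | lin : BangE (some .lin) (some .bang)
  | none : BangE none none
  | para : BangE none (some .para)

inductive BangCtx : Ctx → Ctx → Prop
  | nil : BangCtx [] []
  | cons : BangE e e' → BangCtx Γ Γ' → BangCtx (e :: Γ) (e' :: Γ')

mutual
inductive WfV : Ctx → Val → Prop
  | star : ParaOnly Γ → WfV Γ .star
  | varLin : ParaOnly Γ → WfV (some .lin :: Γ) (.var 0)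
  | varPara : ParaOnly Γ → WfV (some .para :: Γ) (.var 0)
  | varThere : (e = none ∨ e = some SMark.para) → WfV Γ (.var x) →
      WfV (e :: Γ) (.var (x + 1))
  | lam : WfP (some .lin :: Γ) P → WfV Γ (.lam P)
  | blamBang : WfP (some .bang :: Γ) P → WfV Γ (.blam P)
  | blamPara : WfP (some .para :: Γ) P → WfV Γ (.blam P)
  | bang : BangCtx Γ Δ → WfV Γ V → WfV Δ (.bang V)
inductive WfP : Ctx → Proc → Prop
  | nil : ParaOnly Γ → WfP Γ .nil
  | par : Split Γ Γ₁ Γ₂ → WfP Γ₁ P → WfP Γ₂ Q → WfP Γ (.par P Q)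
  | inp : WfP (some .lin :: Γ) P → WfP Γ (.inp a P)
  | binpBang : WfP (some .bang :: Γ) P → WfP Γ (.binp a P)
  | binpPara : WfP (some .para :: Γ) P → WfP Γ (.binp a P)
  | out : Split Γ Γ₁ Γ₂ → WfV Γ₁ V → WfP Γ₂ P → WfP Γ (.out a V P)
  | nu : WfP Γ P → WfP Γ (.nu a P)
  | app : Split Γ Γ₁ Γ₂ → WfV Γ₁ V → WfV Γ₂ W → WfP Γ (.app V W)
end

/-! Measures: size, box depth, free occurrences, duplicability factor,
parametrized weight, weight. -/

mutual
def sizeV : Val → ℕ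
  | .star => 1
  | .var _ => 1
  | .lam P => sizeP P + 1
  | .blam P => sizeP P + 1
  | .bang V => sizeV V + 1
def sizeP : Proc → ℕ
  | .nil => 1
  | .par P Q => sizeP P + sizeP Q + 1
  | .inp _ P => sizeP P + 1
  | .binp _ P => sizeP P + 1
  | .out _ V P => sizeV V + sizeP P + 1
  | .nu _ P => sizeP P + 1
  | .app V W => sizeV V + sizeV W + 1
end

mutual
def bdV : Val → ℕ
  | .star => 0
  | .var _ => 0
  | .lam P => bdP P
  | .blam P => bdP P
  | .bang V => bdV V + 1
def bdP : Proc → ℕ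
  | .nil => 0
  | .par P Q => max (bdP P) (bdP Q)
  | .inp _ P => bdP P
  | .binp _ P => bdP P
  | .out _ V P => max (bdV V) (bdP P)
  | .nu _ P => bdP P
  | .app V W => max (bdV V) (bdV W)
end

-- Number of free occurrences of the variable (de Bruijn index) `k`.
mutual
def foV (k : ℕ) : Val → ℕ
  | .star => 0
  | .var x => if x = k then 1 else 0
  | .lam P => foP (k + 1) P
  | .blam P => foP (k + 1) P
  | .bang V => foV k V
def foP (k : ℕ) : Proc → ℕ
  | .nil => 0
  | .par P Q => foP k P + foP k Q
  | .inp _ P => foP (k + 1) P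
  | .binp _ P => foP (k + 1) P
  | .out _ V P => foV k V + foP k P
  | .nu _ P => foP k P
  | .app V W => foV k V + foV k W
end

-- Duplicability factor.
mutual
def dV : Val → ℕ
  | .star => 1
  | .var _ => 1
  | .lam P => max (dP P) (foP 0 P)
  | .blam P => max (dP P) (foP 0 P)
  | .bang V => dV V
def dP : Proc → ℕ
  | .nil => 1
  | .par P Q => max (dP P) (dP Q)
  | .inp _ P => max (dP P) (foP 0 P)
  | .binp _ P => max (dP P) (foP 0 P)
  | .out _ V P => max (dV V) (dP P)
  | .nu _ P => dP P
  | .app V W => max (dV V) (dV W)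
end

-- `n`-parametrized weight.
mutual
def wV (n : ℕ) : Val → ℕ
  | .star => 1
  | .var _ => 1
  | .lam P => wP n P
  | .blam P => wP n P
  | .bang V => n * wV n V + 1
def wP (n : ℕ) : Proc → ℕ
  | .nil => 1
  | .par P Q => wP n P + wP n Q + 1
  | .inp _ P => wP n P + 1
  | .binp _ P => wP n P + 1
  | .out _ V P => wV n V + wP n P
  | .nu _ P => wP n P
  | .app V W => wV n V + wV n W + 1
end

/-- The weight of a process. -/
def weightP (P : Proc) : ℕ := wP (dP P) P
/-- The weight of a value. -/
def weightV (V : Val) : ℕ := wV (dV V) V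

/-! ### Well-formed terms are closed relative to their context -/

theorem Split.length {Γ Γ₁ Γ₂ : Ctx} (h : Split Γ Γ₁ Γ₂) :
    Γ₁.length = Γ.length ∧ Γ₂.length = Γ.length := by
  induction h with
  | nil => simp
  | cons _ _ ih => simp [ih.1, ih.2]

theorem BangCtx.length {Γ Δ : Ctx} (h : BangCtx Γ Δ) : Γ.length = Δ.length := by
  induction h with
  | nil => rfl
  | cons _ _ ih => simp [ih]

mutual
theorem foV_eq_zero {Γ : Ctx} {V : Val} (h : WfV Γ V) (k : ℕ) (hk : Γ.length ≤ k) :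
    foV k V = 0 := by
  cases h with
  | star _ => simp [foV]
  | varLin _ => simp only [List.length_cons] at hk; simp only [foV]; rw [if_neg (by omega)]
  | varPara _ => simp only [List.length_cons] at hk; simp only [foV]; rw [if_neg (by omega)]
  | @varThere _ _ x _ h =>
    simp only [List.length_cons] at hk
    have ih := foV_eq_zero h (k - 1) (by omega)
    simp only [foV] at ih ⊢
    split at ih <;> simp_all; omega
  | lam h => exact foP_eq_zero h (k + 1) (by simpa using hk)
  | blamBang h => exact foP_eq_zero h (k + 1) (by simpa using hk)
  | blamPara h => exact foP_eq_zero h (k + 1) (by simpa using hk)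
  | bang hb h => exact foV_eq_zero h k (by rw [hb.length]; exact hk)
theorem foP_eq_zero {Γ : Ctx} {P : Proc} (h : WfP Γ P) (k : ℕ) (hk : Γ.length ≤ k) :
    foP k P = 0 := by
  cases h with
  | nil _ => simp [foP]
  | par s h₁ h₂ =>
    simp [foP, foP_eq_zero h₁ k (s.length.1 ▸ hk), foP_eq_zero h₂ k (s.length.2 ▸ hk)]
  | inp h => exact foP_eq_zero h (k + 1) (by simpa using hk)
  | binpBang h => exact foP_eq_zero h (k + 1) (by simpa using hk)
  | binpPara h => exact foP_eq_zero h (k + 1) (by simpa using hk)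
  | out s h₁ h₂ =>
    simp [foP, foV_eq_zero h₁ k (s.length.1 ▸ hk), foP_eq_zero h₂ k (s.length.2 ▸ hk)]
  | nu h => exact foP_eq_zero h k hk
  | app s h₁ h₂ =>
    simp [foP, foV_eq_zero h₁ k (s.length.1 ▸ hk), foV_eq_zero h₂ k (s.length.2 ▸ hk)]
end

/-! ### Substitution of closed values -/

theorem succ_shift {f : ℕ → ℕ} {c : ℕ} (h : ∀ k, c ≤ k → f (k + 1) = 0) :
    ∀ k, c + 1 ≤ k → f k = 0 := by
  intro k hk
  obtain ⟨k, rfl⟩ : ∃ j, k = j + 1 := ⟨k - 1, by omega⟩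
  exact h k (by omega)

mutual
theorem liftV_eq_self (V : Val) (c : ℕ) (h : ∀ k, c ≤ k → foV k V = 0) : liftV c V = V := by
  cases V with
  | star => rfl
  | var x =>
    have := h x
    simp only [foV, if_true] at this
    simp only [liftV]; rw [if_pos (by omega)]
  | lam P => simp only [liftV]; rw [liftP_eq_self P (c + 1) (succ_shift (f := fun k => foP k P) h)]
  | blam P => simp only [liftV]; rw [liftP_eq_self P (c + 1) (succ_shift (f := fun k => foP k P) h)]
  | bang V => simp only [liftV]; rw [liftV_eq_self V c h]
theorem liftP_eq_self (P : Proc) (c : ℕ) (h : ∀ k, c ≤ k → foP k P = 0) : liftP c P = P := by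
  cases P with
  | nil => rfl
  | par P Q =>
    simp only [foP, Nat.add_eq_zero_iff] at h
    simp only [liftP]
    rw [liftP_eq_self P c fun k hk => (h k hk).1, liftP_eq_self Q c fun k hk => (h k hk).2]
  | inp a P => simp only [liftP]; rw [liftP_eq_self P (c + 1) (succ_shift (f := fun k => foP k P) h)]
  | binp a P => simp only [liftP]; rw [liftP_eq_self P (c + 1) (succ_shift (f := fun k => foP k P) h)]
  | out a V P =>
    simp only [foP, Nat.add_eq_zero_iff] at h
    simp only [liftP]
    rw [liftV_eq_self V c fun k hk => (h k hk).1, liftP_eq_self P c fun k hk => (h k hk).2]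
  | nu a P => simp only [liftP]; rw [liftP_eq_self P c h]
  | app V W =>
    simp only [foP, Nat.add_eq_zero_iff] at h
    simp only [liftP]
    rw [liftV_eq_self V c fun k hk => (h k hk).1, liftV_eq_self W c fun k hk => (h k hk).2]
end

mutual
theorem foV_substV {U : Val} (hU : ∀ k, foV k U = 0) (V : Val) (k j : ℕ) :
    foV j (substV U k V) = if j < k then foV j V else foV (j + 1) V := by
  have hl : liftV 0 U = U := liftV_eq_self U 0 fun k _ => hU k
  cases V with
  | star => simp [substV, foV]
  | var x =>
    simp only [substV]
    split_ifs <;> simp only [foV, hU] <;> split_ifs <;> first | rfl | omega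
  | lam P => simp [substV, foV, hl, foP_substP hU P]
  | blam P => simp [substV, foV, hl, foP_substP hU P]
  | bang V => simp [substV, foV, foV_substV hU V]
/-- Substituting a closed value for the variable `k` neither creates nor destroys occurrences of
the other variables; those above `k` are renumbered. -/
theorem foP_substP {U : Val} (hU : ∀ k, foV k U = 0) (P : Proc) (k j : ℕ) :
    foP j (substP U k P) = if j < k then foP j P else foP (j + 1) P := by
  have hl : liftV 0 U = U := liftV_eq_self U 0 fun k _ => hU k
  cases P with
  | nil => simp [substP, foP]
  | par P Q => simp only [substP, foP, foP_substP hU P, foP_substP hU Q]; split_ifs <;> rfl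
  | inp a P => simp [substP, foP, hl, foP_substP hU P]
  | binp a P => simp [substP, foP, hl, foP_substP hU P]
  | out a V P => simp only [substP, foP, foV_substV hU V, foP_substP hU P]; split_ifs <;> rfl
  | nu a P => simp [substP, foP, foP_substP hU P]
  | app V W => simp only [substP, foP, foV_substV hU V, foV_substV hU W]; split_ifs <;> rfl
end

mutual
theorem dV_substV_le {U : Val} (hU : ∀ k, foV k U = 0) (V : Val) (k : ℕ) :
    dV (substV U k V) ≤ max (dV V) (dV U) := by
  have hl : liftV 0 U = U := liftV_eq_self U 0 fun k _ => hU k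
  cases V with
  | star => simp [substV, dV]
  | var x => simp only [substV]; split_ifs <;> simp [dV]
  | lam P =>
    have := dP_substP_le hU P (k + 1)
    simp only [substV, dV, hl, foP_substP hU P, Nat.succ_pos, if_true]; omega
  | blam P =>
    have := dP_substP_le hU P (k + 1)
    simp only [substV, dV, hl, foP_substP hU P, Nat.succ_pos, if_true]; omega
  | bang V => exact dV_substV_le hU V k
theorem dP_substP_le {U : Val} (hU : ∀ k, foV k U = 0) (P : Proc) (k : ℕ) :
    dP (substP U k P) ≤ max (dP P) (dV U) := by
  have hl : liftV 0 U = U := liftV_eq_self U 0 fun k _ => hU k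
  cases P with
  | nil => simp [substP, dP]
  | par P Q =>
    have := dP_substP_le hU P k
    have := dP_substP_le hU Q k
    simp only [substP, dP]; omega
  | inp a P =>
    have := dP_substP_le hU P (k + 1)
    simp only [substP, dP, hl, foP_substP hU P, Nat.succ_pos, if_true]; omega
  | binp a P =>
    have := dP_substP_le hU P (k + 1)
    simp only [substP, dP, hl, foP_substP hU P, Nat.succ_pos, if_true]; omega
  | out a V P =>
    have := dV_substV_le hU V k
    have := dP_substP_le hU P k
    simp only [substP, dP]; omega
  | nu a P => exact dP_substP_le hU P k
  | app V W =>
    have := dV_substV_le hU V k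
    have := dV_substV_le hU W k
    simp only [substP, dP]; omega
end

/-! ### Invariance under structural congruence -/

mutual
theorem foV_chV (a b : ℕ) (V : Val) (k : ℕ) : foV k (chV a b V) = foV k V := by
  cases V with
  | star => rfl
  | var x => rfl
  | lam P => exact foP_chP a b P (k + 1)
  | blam P => exact foP_chP a b P (k + 1)
  | bang V => exact foV_chV a b V k
theorem foP_chP (a b : ℕ) (P : Proc) (k : ℕ) : foP k (chP a b P) = foP k P := by
  cases P with
  | nil => rfl
  | par P Q => simp [chP, foP, foP_chP a b P, foP_chP a b Q]
  | inp c P => exact foP_chP a b P (k + 1)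
  | binp c P => exact foP_chP a b P (k + 1)
  | out c V P => simp [chP, foP, foV_chV a b V, foP_chP a b P]
  | nu c P => simp only [chP]; split_ifs <;> simp [foP, foP_chP a b P]
  | app V W => simp [chP, foP, foV_chV a b V, foV_chV a b W]
end

mutual
theorem dV_chV (a b : ℕ) (V : Val) : dV (chV a b V) = dV V := by
  cases V with
  | star => rfl
  | var x => rfl
  | lam P => simp [chV, dV, dP_chP a b P, foP_chP]
  | blam P => simp [chV, dV, dP_chP a b P, foP_chP]
  | bang V => exact dV_chV a b V
theorem dP_chP (a b : ℕ) (P : Proc) : dP (chP a b P) = dP P := by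
  cases P with
  | nil => rfl
  | par P Q => simp [chP, dP, dP_chP a b P, dP_chP a b Q]
  | inp c P => simp [chP, dP, dP_chP a b P, foP_chP]
  | binp c P => simp [chP, dP, dP_chP a b P, foP_chP]
  | out c V P => simp [chP, dP, dV_chV a b V, dP_chP a b P]
  | nu c P => simp only [chP]; split_ifs <;> simp [dP, dP_chP a b P]
  | app V W => simp [chP, dP, dV_chV a b V, dV_chV a b W]
end

theorem scp_invariant {P Q : Proc} (h : SCP P Q) : (∀ k, foP k P = foP k Q) ∧ dP P = dP Q := by
  refine SCP.rec
    (motive_1 := fun V W _ => (∀ k, foV k V = foV k W) ∧ dV V = dV W)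
    (motive_2 := fun P Q _ => (∀ k, foP k P = foP k Q) ∧ dP P = dP Q)
    ?_ ?_ ?_ ?_ ?_ ?_ ?_ ?_ ?_ ?_ ?_ ?_ ?_ ?_ ?_ ?_ ?_ ?_ ?_ ?_ h
  all_goals intros
  all_goals simp_all [foV, foP, dV, dP, foP_chP, dP_chP, Nat.add_assoc, max_assoc]
  · exact ⟨fun k => Nat.add_comm _ _, max_comm _ _⟩

theorem foP_scp {P Q : Proc} (h : SCP P Q) (k : ℕ) : foP k P = foP k Q := (scp_invariant h).1 k

theorem dP_scp {P Q : Proc} (h : SCP P Q) : dP P = dP Q := (scp_invariant h).2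

/-! ### Reduction of closed processes -/

/-- The induction never needs the reduct to be closed: the source of every premise is a subterm of
the source of the conclusion, outside any variable binder, or structurally congruent to it. -/
theorem dP_le_of_red {Q P : Proc} (r : Red Q P) (hQ : ∀ k, foP k Q = 0) : dP P ≤ dP Q := by
  induction r with
  | @comm a V P Q =>
    simp only [foP, Nat.add_eq_zero_iff] at hQ
    have := dP_substP_le (fun k => (hQ k).1.1) Q 0
    simp only [dP]; omega
  | @bcomm a V P Q =>
    simp only [foP, foV, Nat.add_eq_zero_iff] at hQ
    have := dP_substP_le (fun k => (hQ k).1.1) Q 0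
    simp only [dP, dV]; omega
  | @beta P V =>
    simp only [foP, Nat.add_eq_zero_iff] at hQ
    have := dP_substP_le (fun k => (hQ k).2) P 0
    simp only [dP, dV]; omega
  | @bbeta P V =>
    simp only [foP, foV, Nat.add_eq_zero_iff] at hQ
    have := dP_substP_le (fun k => (hQ k).2) P 0
    simp only [dP, dV]; omega
  | parL _ ih =>
    simp only [foP, Nat.add_eq_zero_iff] at hQ
    have := ih fun k => (hQ k).1
    simp only [dP]; omega
  | res _ ih => exact ih hQ
  | struct h₁ _ h₂ ih =>
    rw [← dP_scp h₂, dP_scp h₁]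
    exact ih fun k => (foP_scp h₁ k).symm.trans (hQ k)

/-- The duplicability factor does not increase under reduction of well-formed
soft processes. -/
theorem dup_factor_nonincreasing {Q P : Proc} (h : WfP [] Q) (r : Red Q P) :
    dP P ≤ dP Q := by
  exact dP_le_of_red r fun k => foP_eq_zero h k (Nat.zero_le k)
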